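/- Let d ≥ 1 be an integer and A > 0. Let η : (0,∞) → (0,∞) be decreasing and ψ : (0,∞) → (0,∞) decreasing with λ ↦ λ² ψ(λ) increasing, and suppose there exist constants a₁, a₂ > 0 and t₀ ∈ (0,1] such that a₁ t^{−A} ψ(t^{−1}) ≤ η(t) ≤ a₂ t^{−A} ψ(t^{−1}) for all t ∈ (0, t₀]. Assume ∫₁^∞ t^{−d/2} η(t) dt < ∞, and assume either (i) A > 3 − d/2, or (ii) d ≤ 2 and there exist δ > 0 and c > 0 with A − δ > 1 − d/2 and ψ(λx) ≥ c x^{−δ} ψ(λ) for all x ≥ 1 and λ ≥ 1. If the integral I(r) = ∫₀^∞ (4πt)^{−d/2} exp(−r²/(4t)) η(t) dt exists for all sufficiently small r ∈ (0,1), then there exist constants c₁, c₂ > 0 and r₀ ∈ (0,1) such that c₁ r^{−d−2A+2} ψ(r^{−2}) ≤ I(r) ≤ c₂ r^{−d−2A+2} ψ(r^{−2}) for all 0 < r < r₀. -/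

import Mathlib

open MeasureTheory Real Set

/-!
Put `s = r²` and `p = A + d / 2`. Monotonicity of `ψ` (for `t ≤ s`) and its lower scaling (for
`t ≥ s`) give `ψ (1 / t) ≤ (1 + c⁻¹ (t / s) ^ δ) ψ (1 / s)`. Hence on `(0, t₀]` the integrand is at
most a constant times `ψ (1 / s) (1 + c⁻¹ (t / s) ^ δ) t ^ (-p) exp (-s / (4 t))`, and since
`p - δ > 1` the substitution `t ↦ 1 / t` turns its integral over `(0, ∞)` into Gamma values times
`ψ (1 / s) s ^ (1 - p)`. The tail over `(t₀, ∞)` is bounded, whereas `s ^ (1 - p) ψ (1 / s)` stays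
away from zero. For the lower bound the interval `(s, 2 s]` suffices: there the integrand is at
least a constant times `s ^ (-p) ψ (1 / s)`.
-/

/-- The unnormalised density of the inverse Gamma distribution with shape `q - 1` and scale `b`;
powers of `t` times the heat kernel are of this form. -/
noncomputable def invGammaWeight (q b t : ℝ) : ℝ := t ^ (-q) * exp (-(b / t))

/-- The heat kernel in dimension `D` between points at distance `r`, as a function of the time `t`.
The dimension is a real parameter. -/
noncomputable def heatKernel (D r t : ℝ) : ℝ := (4 * π * t) ^ (-D / 2) * exp (-(r ^ 2 / (4 * t)))

/-- Lower scaling of `ψ` at infinity with exponent `-δ` and constant `c`. -/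
def HasLowerScaling (ψ : ℝ → ℝ) (δ c : ℝ) : Prop :=
  ∀ x : ℝ, 1 ≤ x → ∀ l : ℝ, 1 ≤ l → c * x ^ (-δ) * ψ l ≤ ψ (l * x)

lemma integrableOn_and_setIntegral_le_of_le {X : Type*} [MeasurableSpace X] {μ : Measure X}
    {S : Set X} {f g : X → ℝ} (hS : MeasurableSet S) (hf : AEStronglyMeasurable f (μ.restrict S))
    (hg : IntegrableOn g S μ) (hf0 : ∀ x ∈ S, 0 ≤ f x) (hfg : ∀ x ∈ S, f x ≤ g x) :
    IntegrableOn f S μ ∧ ∫ x in S, f x ∂μ ≤ ∫ x in S, g x ∂μ := by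
  have hfI : IntegrableOn f S μ := Integrable.mono' hg hf <|
    (ae_restrict_iff' hS).2 <| .of_forall fun x hx => by
      rw [norm_of_nonneg (hf0 x hx)]
      exact hfg x hx
  exact ⟨hfI, setIntegral_mono_on hfI hg hS hfg⟩

section InvGammaWeight

variable {q b t : ℝ}

lemma invGammaWeight_nonneg (ht : 0 < t) : 0 ≤ invGammaWeight q b t := by
  unfold invGammaWeight
  positivity

lemma rpow_mul_invGammaWeight (ht : 0 < t) (a : ℝ) :
    t ^ a * invGammaWeight q b t = invGammaWeight (q - a) b t := by
  rw [invGammaWeight, invGammaWeight, ← mul_assoc, ← rpow_add ht, neg_sub, sub_eq_add_neg]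

lemma integral_invGammaWeight (hq : 1 < q) (hb : 0 < b) :
    ∫ t in Ioi 0, invGammaWeight q b t = b ^ (1 - q) * Gamma (q - 1) := by
  have hsubst : EqOn (invGammaWeight q b)
      (fun t => (|(-1 : ℝ)| * t ^ ((-1 : ℝ) - 1)) •
        ((t ^ (-1 : ℝ)) ^ (q - 1 - 1) * exp (-(b * t ^ (-1 : ℝ))))) (Ioi 0) := by
    intro t (ht : 0 < t)
    have hpow : t ^ (-q) = t ^ ((-1 : ℝ) - 1) * (t ^ (-1 : ℝ)) ^ (q - 1 - 1) := by
      rw [← rpow_mul ht.le, ← rpow_add ht]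
      ring_nf
    simp only [invGammaWeight, hpow, abs_neg, abs_one, one_mul, smul_eq_mul, rpow_neg_one,
      div_eq_mul_inv, mul_assoc]
  rw [setIntegral_congr_fun measurableSet_Ioi hsubst,
    integral_comp_rpow_Ioi (fun u => u ^ (q - 1 - 1) * exp (-(b * u))) (by norm_num),
    integral_rpow_mul_exp_neg_mul_Ioi (by linarith) hb, one_div, inv_rpow hb.le, ← rpow_neg hb.le,
    neg_sub]

lemma integrableOn_invGammaWeight (hq : 1 < q) (hb : 0 < b) :
    IntegrableOn (invGammaWeight q b) (Ioi 0) := by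
  refine .of_integral_ne_zero ?_
  rw [integral_invGammaWeight hq hb]
  exact (mul_pos (rpow_pos_of_pos hb _) (Gamma_pos_of_pos (by linarith))).ne'

lemma one_add_rpow_mul_invGammaWeight_eqOn {δ : ℝ} (hb : 0 < b) (k : ℝ) :
    EqOn (fun t => (1 + k * (t / b) ^ δ) * invGammaWeight q b t)
      (fun t => invGammaWeight q b t + k * b ^ (-δ) * invGammaWeight (q - δ) b t) (Ioi 0) := by
  intro t (ht : 0 < t)
  simp only [← rpow_mul_invGammaWeight ht δ, div_rpow ht.le hb.le, rpow_neg hb.le]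
  ring

lemma integrableOn_one_add_rpow_mul_invGammaWeight {δ : ℝ} (hδ : 0 ≤ δ) (hq : 1 + δ < q)
    (hb : 0 < b) (k : ℝ) :
    IntegrableOn (fun t => (1 + k * (t / b) ^ δ) * invGammaWeight q b t) (Ioi 0) := by
  rw [integrableOn_congr_fun (one_add_rpow_mul_invGammaWeight_eqOn hb k) measurableSet_Ioi]
  exact (integrableOn_invGammaWeight (by linarith) hb).add
    ((integrableOn_invGammaWeight (by linarith) hb).const_mul _)

lemma integral_one_add_rpow_mul_invGammaWeight {δ : ℝ} (hδ : 0 ≤ δ) (hq : 1 + δ < q)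
    (hb : 0 < b) (k : ℝ) :
    ∫ t in Ioi 0, (1 + k * (t / b) ^ δ) * invGammaWeight q b t
      = b ^ (1 - q) * (Gamma (q - 1) + k * Gamma (q - δ - 1)) := by
  have hq₁ : 1 < q := by linarith
  have hq₂ : 1 < q - δ := by linarith
  have hpow : b ^ (-δ) * b ^ (1 - (q - δ)) = b ^ (1 - q) := by
    rw [← rpow_add hb]
    ring_nf
  rw [setIntegral_congr_fun measurableSet_Ioi (one_add_rpow_mul_invGammaWeight_eqOn hb k),
    integral_add (integrableOn_invGammaWeight hq₁ hb)
      ((integrableOn_invGammaWeight hq₂ hb).const_mul _),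
    integral_const_mul, integral_invGammaWeight hq₁ hb, integral_invGammaWeight hq₂ hb, ← hpow]
  ring

end InvGammaWeight

namespace HasLowerScaling

variable {ψ : ℝ → ℝ} {δ c s t p : ℝ}

lemma of_monotoneOn_rpow_mul (h : MonotoneOn (fun l => l ^ δ * ψ l) (Ioi 0)) :
    HasLowerScaling ψ δ 1 := by
  intro x hx l hl
  have hx0 : 0 < x := one_pos.trans_le hx
  have hl0 : 0 < l := one_pos.trans_le hl
  have hmono : l ^ δ * ψ l ≤ (l * x) ^ δ * ψ (l * x) :=
    h hl0 (mul_pos hl0 hx0) (le_mul_of_one_le_right hl0.le hx)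
  rw [mul_rpow hl0.le hx0.le, mul_assoc] at hmono
  rw [one_mul, rpow_neg hx0.le, inv_mul_le_iff₀ (by positivity)]
  exact le_of_mul_le_mul_left hmono (by positivity)

lemma apply_inv_le (h : HasLowerScaling ψ δ c) (hc : 0 < c) (hs : 0 < s) (hst : s ≤ t)
    (ht : t ≤ 1) : ψ t⁻¹ ≤ c⁻¹ * (t / s) ^ δ * ψ s⁻¹ := by
  have ht0 : 0 < t := hs.trans_le hst
  have hscal := h (t / s) ((one_le_div hs).2 hst) t⁻¹ ((one_le_inv₀ ht0).2 ht)
  rw [show t⁻¹ * (t / s) = s⁻¹ by field_simp, rpow_neg (by positivity)] at hscal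
  calc ψ t⁻¹ = c⁻¹ * (t / s) ^ δ * (c * ((t / s) ^ δ)⁻¹ * ψ t⁻¹) := by field_simp
    _ ≤ c⁻¹ * (t / s) ^ δ * ψ s⁻¹ := by gcongr

lemma apply_inv_le_add (h : HasLowerScaling ψ δ c) (hc : 0 < c)
    (hψpos : ∀ l : ℝ, 0 < l → 0 < ψ l) (hψ : AntitoneOn ψ (Ioi 0)) (hs : 0 < s) (ht0 : 0 < t)
    (ht : t ≤ 1) : ψ t⁻¹ ≤ (1 + c⁻¹ * (t / s) ^ δ) * ψ s⁻¹ := by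
  have hψs := hψpos s⁻¹ (inv_pos.2 hs)
  rw [add_mul, one_mul]
  rcases le_total t s with hts | hst
  · exact (hψ (inv_pos.2 hs) (inv_pos.2 ht0) (inv_anti₀ ht0 hts)).trans
      (le_add_of_nonneg_right (by positivity))
  · exact (h.apply_inv_le hc hs hst ht).trans (le_add_of_nonneg_left hψs.le)

lemma mul_apply_one_le (h : HasLowerScaling ψ δ c) (hc : 0 < c)
    (hψpos : ∀ l : ℝ, 0 < l → 0 < ψ l) (hp : 1 + δ ≤ p) (hs : 0 < s) (hs1 : s ≤ 1) :
    c * ψ 1 ≤ s ^ (1 - p) * ψ s⁻¹ := by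
  have hψs := hψpos s⁻¹ (inv_pos.2 hs)
  have hpow : (1 / s) ^ δ ≤ s ^ (1 - p) := by
    rw [one_div, inv_rpow hs.le, ← rpow_neg hs.le]
    exact rpow_le_rpow_of_exponent_ge hs hs1 (by linarith)
  have hone : ψ 1 ≤ c⁻¹ * (1 / s) ^ δ * ψ s⁻¹ := by
    simpa only [inv_one] using h.apply_inv_le hc hs hs1 le_rfl
  calc c * ψ 1 ≤ c * (c⁻¹ * (1 / s) ^ δ * ψ s⁻¹) := by gcongr
    _ = (1 / s) ^ δ * ψ s⁻¹ := by field_simp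
    _ ≤ s ^ (1 - p) * ψ s⁻¹ := by gcongr

end HasLowerScaling

section HeatKernel

variable {A D δ c a₁ a₂ t₀ r t : ℝ} {η ψ : ℝ → ℝ}

lemma heatKernel_nonneg (ht : 0 < t) : 0 ≤ heatKernel D r t := by
  unfold heatKernel
  positivity

lemma measurable_heatKernel : Measurable (heatKernel D r) := by
  unfold heatKernel
  fun_prop

lemma heatKernel_eq_invGammaWeight (ht : 0 < t) :
    heatKernel D r t = (4 * π) ^ (-D / 2) * invGammaWeight (D / 2) (r ^ 2 / 4) t := by
  rw [heatKernel, invGammaWeight, mul_rpow (by positivity) ht.le, mul_assoc, div_div, neg_div]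

lemma heatKernel_mul_rpow_neg (ht : 0 < t) :
    heatKernel D r t * t ^ (-A)
      = (4 * π) ^ (-D / 2) * invGammaWeight (A + D / 2) (r ^ 2 / 4) t := by
  rw [heatKernel_eq_invGammaWeight ht, mul_assoc, mul_comm _ (t ^ (-A)),
    rpow_mul_invGammaWeight ht, sub_neg_eq_add, add_comm]

lemma heatKernel_le (ht : 0 < t) : heatKernel D r t ≤ (4 * π) ^ (-D / 2) * t ^ (-D / 2) := by
  rw [heatKernel, mul_rpow (by positivity) ht.le]
  exact mul_le_of_le_one_right (by positivity) (exp_le_one_iff.2 (neg_nonpos.2 (by positivity)))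

lemma heatKernel_mul_le_invGammaWeight (hψpos : ∀ l : ℝ, 0 < l → 0 < ψ l)
    (hψ : AntitoneOn ψ (Ioi 0)) (hscal : HasLowerScaling ψ δ c) (hc : 0 < c) (ha₂ : 0 ≤ a₂)
    (hr : 0 < r) (ht : t ∈ Ioc 0 1) (hηt : η t ≤ a₂ * t ^ (-A) * ψ t⁻¹) :
    heatKernel D r t * η t
      ≤ a₂ * (4 * π) ^ (-D / 2) * ψ (r ^ 2)⁻¹
        * ((1 + c⁻¹ * 4⁻¹ ^ δ * (t / (r ^ 2 / 4)) ^ δ)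
          * invGammaWeight (A + D / 2) (r ^ 2 / 4) t) := by
  have ht0 : 0 < t := ht.1
  have hK : 0 ≤ heatKernel D r t := heatKernel_nonneg ht0
  have hquarter : 4⁻¹ ^ δ * (t / (r ^ 2 / 4)) ^ δ = (t / r ^ 2) ^ δ := by
    rw [← mul_rpow (by norm_num) (by positivity)]
    field_simp
  rw [mul_assoc c⁻¹, hquarter]
  calc heatKernel D r t * η t
      ≤ heatKernel D r t * (a₂ * t ^ (-A) * ((1 + c⁻¹ * (t / r ^ 2) ^ δ) * ψ (r ^ 2)⁻¹)) := by
        gcongr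
        exact hηt.trans (mul_le_mul_of_nonneg_left
          (hscal.apply_inv_le_add hc hψpos hψ (by positivity) ht0 ht.2) (by positivity))
    _ = a₂ * ψ (r ^ 2)⁻¹ * (1 + c⁻¹ * (t / r ^ 2) ^ δ) * (heatKernel D r t * t ^ (-A)) := by ring
    _ = _ := by
        rw [heatKernel_mul_rpow_neg ht0]
        ring

lemma exists_setIntegral_Ioc_heatKernel_mul_le
    (hη : ∀ t : ℝ, 0 < t → 0 ≤ η t)
    (hηm : AEStronglyMeasurable η (volume.restrict (Ioi 0)))
    (hψpos : ∀ l : ℝ, 0 < l → 0 < ψ l) (hψ : AntitoneOn ψ (Ioi 0))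
    (hscal : HasLowerScaling ψ δ c) (hc : 0 < c) (hδ : 0 ≤ δ) (hp : 1 + δ < A + D / 2)
    (ha₂ : 0 < a₂) (ht₀ : t₀ ≤ 1)
    (hup : ∀ t : ℝ, 0 < t → t ≤ t₀ → η t ≤ a₂ * t ^ (-A) * ψ t⁻¹) :
    ∃ C : ℝ, 0 < C ∧ ∀ r : ℝ, 0 < r →
      IntegrableOn (fun t => heatKernel D r t * η t) (Ioc 0 t₀) ∧
      ∫ t in Ioc 0 t₀, heatKernel D r t * η t
        ≤ C * (r ^ 2) ^ (1 - (A + D / 2)) * ψ (r ^ 2)⁻¹ := by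
  set p := A + D / 2
  set k := c⁻¹ * 4⁻¹ ^ δ
  have : 0 < k := by positivity
  have hΓ₁ : 0 < Gamma (p - 1) := Gamma_pos_of_pos (by linarith)
  have hΓ₂ : 0 < Gamma (p - δ - 1) := Gamma_pos_of_pos (by linarith)
  refine ⟨a₂ * (4 * π) ^ (-D / 2) * 4⁻¹ ^ (1 - p) * (Gamma (p - 1) + k * Gamma (p - δ - 1)),
    by positivity, fun r hr => ?_⟩
  have hb : 0 < r ^ 2 / 4 := by positivity
  have hψs := hψpos (r ^ 2)⁻¹ (by positivity)
  set M := a₂ * (4 * π) ^ (-D / 2) * ψ (r ^ 2)⁻¹ with hM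
  set g : ℝ → ℝ := fun t =>
    M * ((1 + k * (t / (r ^ 2 / 4)) ^ δ) * invGammaWeight p (r ^ 2 / 4) t) with hg
  have hgI : IntegrableOn g (Ioi 0) :=
    (integrableOn_one_add_rpow_mul_invGammaWeight hδ hp hb k).const_mul M
  have hg0 : ∀ t ∈ Ioi (0 : ℝ), 0 ≤ g t := fun t (ht : 0 < t) => by
    have hweight := invGammaWeight_nonneg (q := p) (b := r ^ 2 / 4) ht
    positivity
  obtain ⟨hfI, hfg⟩ := integrableOn_and_setIntegral_le_of_le measurableSet_Ioc
    (measurable_heatKernel.aestronglyMeasurable.mul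
      (hηm.mono_measure (Measure.restrict_mono Ioc_subset_Ioi_self le_rfl)))
    (hgI.mono_set Ioc_subset_Ioi_self)
    (fun t ht => mul_nonneg (heatKernel_nonneg ht.1) (hη t ht.1))
    (fun t ht => heatKernel_mul_le_invGammaWeight hψpos hψ hscal hc ha₂.le hr
      ⟨ht.1, ht.2.trans ht₀⟩ (hup t ht.1 ht.2))
  refine ⟨hfI, hfg.trans ?_⟩
  calc ∫ t in Ioc 0 t₀, g t ≤ ∫ t in Ioi 0, g t :=
        setIntegral_mono_set hgI ((ae_restrict_iff' measurableSet_Ioi).2 (.of_forall hg0))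
          Ioc_subset_Ioi_self.eventuallyLE
    _ = M * ((r ^ 2 / 4) ^ (1 - p) * (Gamma (p - 1) + k * Gamma (p - δ - 1))) := by
        rw [hg, integral_const_mul, integral_one_add_rpow_mul_invGammaWeight hδ hp hb k]
    _ = _ := by
        rw [div_eq_mul_inv (r ^ 2), mul_rpow (by positivity) (by norm_num), hM]
        ring

lemma exists_setIntegral_Ioi_heatKernel_mul_le
    (hη : ∀ t : ℝ, 0 < t → 0 ≤ η t)
    (hηm : AEStronglyMeasurable η (volume.restrict (Ioi 0)))
    (hηI : IntegrableOn (fun t => t ^ (-D / 2) * η t) (Ioi t₀)) (ht₀ : 0 < t₀)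
    (hψpos : ∀ l : ℝ, 0 < l → 0 < ψ l)
    (hscal : HasLowerScaling ψ δ c) (hc : 0 < c) (hp : 1 + δ ≤ A + D / 2) :
    ∃ C : ℝ, 0 ≤ C ∧ ∀ r : ℝ, 0 < r → r ≤ 1 →
      IntegrableOn (fun t => heatKernel D r t * η t) (Ioi t₀) ∧
      ∫ t in Ioi t₀, heatKernel D r t * η t
        ≤ C * (r ^ 2) ^ (1 - (A + D / 2)) * ψ (r ^ 2)⁻¹ := by
  have hsub : Ioi t₀ ⊆ Ioi 0 := Ioi_subset_Ioi ht₀.le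
  have hψ1 := hψpos 1 one_pos
  set K := ∫ t in Ioi t₀, (4 * π) ^ (-D / 2) * (t ^ (-D / 2) * η t)
  have hK : 0 ≤ K := setIntegral_nonneg measurableSet_Ioi fun t ht => by
    have ht0 : 0 < t := hsub ht
    have := hη t ht0
    positivity
  refine ⟨K / (c * ψ 1), by positivity, fun r hr hr1 => ?_⟩
  obtain ⟨hfI, hfK⟩ := integrableOn_and_setIntegral_le_of_le measurableSet_Ioi
    (measurable_heatKernel.aestronglyMeasurable.mul
      (hηm.mono_measure (Measure.restrict_mono hsub le_rfl)))
    (hηI.const_mul ((4 * π) ^ (-D / 2)))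
    (fun t ht => mul_nonneg (heatKernel_nonneg (hsub ht)) (hη t (hsub ht)))
    (fun t ht => by
      rw [← mul_assoc]
      exact mul_le_mul_of_nonneg_right (heatKernel_le (r := r) (hsub ht)) (hη t (hsub ht)))
  refine ⟨hfI, hfK.trans ?_⟩
  calc K = K / (c * ψ 1) * (c * ψ 1) := by field_simp
    _ ≤ K / (c * ψ 1) * ((r ^ 2) ^ (1 - (A + D / 2)) * ψ (r ^ 2)⁻¹) :=
        mul_le_mul_of_nonneg_left (hscal.mul_apply_one_le hc hψpos hp (by positivity)
          (pow_le_one₀ hr.le hr1)) (by positivity)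
    _ = _ := by rw [mul_assoc]

lemma exists_integral_heatKernel_mul_le
    (hη : ∀ t : ℝ, 0 < t → 0 ≤ η t)
    (hηm : AEStronglyMeasurable η (volume.restrict (Ioi 0)))
    (hηI : IntegrableOn (fun t => t ^ (-D / 2) * η t) (Ioi t₀))
    (hψpos : ∀ l : ℝ, 0 < l → 0 < ψ l) (hψ : AntitoneOn ψ (Ioi 0))
    (hscal : HasLowerScaling ψ δ c) (hc : 0 < c) (hδ : 0 ≤ δ) (hp : 1 + δ < A + D / 2)
    (ha₂ : 0 < a₂) (ht₀ : t₀ ∈ Ioc 0 1)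
    (hup : ∀ t : ℝ, 0 < t → t ≤ t₀ → η t ≤ a₂ * t ^ (-A) * ψ t⁻¹) :
    ∃ C : ℝ, 0 < C ∧ ∀ r : ℝ, 0 < r → r ≤ 1 →
      IntegrableOn (fun t => heatKernel D r t * η t) (Ioi 0) ∧
      ∫ t in Ioi 0, heatKernel D r t * η t
        ≤ C * (r ^ 2) ^ (1 - (A + D / 2)) * ψ (r ^ 2)⁻¹ := by
  obtain ⟨C₁, hC₁, hsmall⟩ := exists_setIntegral_Ioc_heatKernel_mul_le (D := D) hη hηm hψpos hψ
    hscal hc hδ hp ha₂ ht₀.2 hup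
  obtain ⟨C₂, hC₂, htail⟩ := exists_setIntegral_Ioi_heatKernel_mul_le hη hηm hηI ht₀.1 hψpos
    hscal hc hp.le
  refine ⟨C₁ + C₂, by positivity, fun r hr hr1 => ?_⟩
  obtain ⟨hI₁, hle₁⟩ := hsmall r hr
  obtain ⟨hI₂, hle₂⟩ := htail r hr hr1
  rw [← Ioc_union_Ioi_eq_Ioi ht₀.1.le,
    setIntegral_union (Ioc_disjoint_Ioi le_rfl) measurableSet_Ioi hI₁ hI₂, add_mul, add_mul]
  exact ⟨hI₁.union hI₂, add_le_add hle₁ hle₂⟩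

lemma le_heatKernel_mul (hψpos : ∀ l : ℝ, 0 < l → 0 < ψ l) (hψ : AntitoneOn ψ (Ioi 0))
    (ha₁ : 0 ≤ a₁) (hp : 0 ≤ A + D / 2) (hr : 0 < r) (ht : t ∈ Ioc (r ^ 2) (2 * r ^ 2))
    (hηt : a₁ * t ^ (-A) * ψ t⁻¹ ≤ η t) :
    a₁ * (4 * π) ^ (-D / 2) * ((2 * r ^ 2) ^ (-(A + D / 2)) * exp (-(1 / 4))) * ψ (r ^ 2)⁻¹
      ≤ heatKernel D r t * η t := by
  have hs : 0 < r ^ 2 := by positivity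
  have ht0 : 0 < t := hs.trans ht.1
  have hψs := hψpos (r ^ 2)⁻¹ (inv_pos.2 hs)
  have hψt : ψ (r ^ 2)⁻¹ ≤ ψ t⁻¹ := hψ (inv_pos.2 ht0) (inv_pos.2 hs) (inv_anti₀ hs ht.1.le)
  have hpow : (2 * r ^ 2) ^ (-(A + D / 2)) ≤ t ^ (-(A + D / 2)) :=
    rpow_le_rpow_of_nonpos ht0 ht.2 (neg_nonpos.2 hp)
  have hexp : exp (-(1 / 4)) ≤ exp (-(r ^ 2 / 4 / t)) := by
    rw [exp_le_exp, neg_le_neg_iff, div_le_iff₀ ht0]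
    linarith [ht.1]
  have hK : 0 ≤ heatKernel D r t := heatKernel_nonneg ht0
  calc _ ≤ a₁ * (4 * π) ^ (-D / 2) * invGammaWeight (A + D / 2) (r ^ 2 / 4) t * ψ t⁻¹ := by
        unfold invGammaWeight
        gcongr
    _ = heatKernel D r t * (a₁ * t ^ (-A) * ψ t⁻¹) := by
        rw [mul_assoc a₁, ← heatKernel_mul_rpow_neg ht0]
        ring
    _ ≤ heatKernel D r t * η t := by gcongr

lemma le_integral_heatKernel_mul (hη : ∀ t : ℝ, 0 < t → 0 ≤ η t)
    (hψpos : ∀ l : ℝ, 0 < l → 0 < ψ l) (hψ : AntitoneOn ψ (Ioi 0)) (ha₁ : 0 ≤ a₁)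
    (hp : 0 ≤ A + D / 2) (hlow : ∀ t : ℝ, 0 < t → t ≤ t₀ → a₁ * t ^ (-A) * ψ t⁻¹ ≤ η t)
    (hr : 0 < r) (hrt₀ : 2 * r ^ 2 ≤ t₀)
    (hI : IntegrableOn (fun t => heatKernel D r t * η t) (Ioi 0)) :
    a₁ * (4 * π) ^ (-D / 2) * (2 ^ (-(A + D / 2)) * exp (-(1 / 4)))
        * (r ^ 2) ^ (1 - (A + D / 2)) * ψ (r ^ 2)⁻¹
      ≤ ∫ t in Ioi 0, heatKernel D r t * η t := by
  have hs : 0 < r ^ 2 := by positivity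
  have hsub : Ioc (r ^ 2) (2 * r ^ 2) ⊆ Ioi 0 := fun t ht => hs.trans ht.1
  have hvol : volume.real (Ioc (r ^ 2) (2 * r ^ 2)) = r ^ 2 := by
    rw [volume_real_Ioc_of_le (by linarith)]
    ring
  calc _ = a₁ * (4 * π) ^ (-D / 2) * ((2 * r ^ 2) ^ (-(A + D / 2)) * exp (-(1 / 4)))
          * ψ (r ^ 2)⁻¹ * volume.real (Ioc (r ^ 2) (2 * r ^ 2)) := by
        rw [hvol, mul_rpow zero_le_two hs.le, sub_eq_add_neg 1, rpow_add hs, rpow_one]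
        ring
    _ ≤ ∫ t in Ioc (r ^ 2) (2 * r ^ 2), heatKernel D r t * η t :=
        setIntegral_ge_of_const_le_real measurableSet_Ioc measure_Ioc_lt_top.ne
          (fun t ht => le_heatKernel_mul hψpos hψ ha₁ hp hr ht
            (hlow t (hsub ht) (ht.2.trans hrt₀))) (hI.mono_set hsub)
    _ ≤ ∫ t in Ioi 0, heatKernel D r t * η t :=
        setIntegral_mono_set hI ((ae_restrict_iff' measurableSet_Ioi).2 <| .of_forall fun t ht =>
          mul_nonneg (heatKernel_nonneg ht) (hη t ht)) hsub.eventuallyLE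

end HeatKernel

lemma integrableOn_Ioi_rpow_mul_of_antitoneOn {f : ℝ → ℝ} {a b q : ℝ} (hf : AntitoneOn f (Ioi 0))
    (ha : 0 < a) (hI : IntegrableOn (fun t => t ^ q * f t) (Ioi b)) :
    IntegrableOn (fun t => t ^ q * f t) (Ioi a) := by
  have hsub : Icc a b ⊆ Ioi 0 := fun t ht => ha.trans_le ht.1
  have hIcc : IntegrableOn (fun t => t ^ q * f t) (Icc a b) :=
    ((hf.mono hsub).integrableOn_isCompact isCompact_Icc).continuousOn_mul
      (continuousOn_id.rpow_const fun t ht => .inl (hsub ht).ne') isCompact_Icc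
  refine (hIcc.union hI).mono_set fun t ht => ?_
  exact (le_or_gt t b).imp (fun htb => ⟨le_of_lt ht, htb⟩) id

theorem stmt_13_general {A D δ c a₁ a₂ t₀ : ℝ} {η ψ : ℝ → ℝ}
    (hη : ∀ t : ℝ, 0 < t → 0 ≤ η t)
    (hηm : AEStronglyMeasurable η (volume.restrict (Ioi 0)))
    (hηI : IntegrableOn (fun t => t ^ (-D / 2) * η t) (Ioi t₀))
    (hψpos : ∀ l : ℝ, 0 < l → 0 < ψ l) (hψ : AntitoneOn ψ (Ioi 0))
    (hscal : HasLowerScaling ψ δ c) (hc : 0 < c) (hδ : 0 ≤ δ) (hp : 1 + δ < A + D / 2)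
    (ha₁ : 0 < a₁) (ha₂ : 0 < a₂) (ht₀ : t₀ ∈ Ioc 0 1)
    (hcomp : ∀ t : ℝ, 0 < t → t ≤ t₀ →
      a₁ * t ^ (-A) * ψ t⁻¹ ≤ η t ∧ η t ≤ a₂ * t ^ (-A) * ψ t⁻¹) :
    ∃ c₁ : ℝ, 0 < c₁ ∧ ∃ c₂ : ℝ, 0 < c₂ ∧ ∃ r₀ : ℝ, r₀ ∈ Ioo 0 1 ∧
      ∀ r : ℝ, 0 < r → r < r₀ →
        c₁ * r ^ (-D - 2 * A + 2) * ψ (r ^ 2)⁻¹ ≤ ∫ t in Ioi 0, heatKernel D r t * η t ∧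
        ∫ t in Ioi 0, heatKernel D r t * η t ≤ c₂ * r ^ (-D - 2 * A + 2) * ψ (r ^ 2)⁻¹ := by
  obtain ⟨ht₀pos, ht₀1⟩ := ht₀
  obtain ⟨c₂, hc₂, hupper⟩ := exists_integral_heatKernel_mul_le hη hηm hηI hψpos hψ hscal hc hδ hp
    ha₂ ⟨ht₀pos, ht₀1⟩ fun t ht htt₀ => (hcomp t ht htt₀).2
  refine ⟨a₁ * (4 * π) ^ (-D / 2) * (2 ^ (-(A + D / 2)) * exp (-(1 / 4))), by positivity,
    c₂, hc₂, t₀ / 2, ⟨by linarith, by linarith⟩, fun r hr hrt₀ => ?_⟩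
  have hpow : r ^ (-D - 2 * A + 2) = (r ^ 2) ^ (1 - (A + D / 2)) := by
    rw [← rpow_two, ← rpow_mul hr.le]
    ring_nf
  obtain ⟨hI, hle⟩ := hupper r hr (by linarith)
  rw [hpow]
  exact ⟨le_integral_heatKernel_mul hη hψpos hψ ha₁.le (by linarith)
    (fun t ht htt₀ => (hcomp t ht htt₀).1) hr (by nlinarith) hI, hle⟩

/-- Proposition A.3: Let `η, ψ : (0,∞) → (0,∞)` be decreasing
with `λ ↦ λ²ψ(λ)` increasing and `η(t) ≍ t^{−A} ψ(t^{−1})` on `(0,t₀]`; assume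
`∫₁^∞ t^{−d/2} η(t) dt < ∞`, and either (i) `A > 3 − d/2`, or (ii) `d ≤ 2` and
there are `δ, c > 0` with `A − δ > 1 − d/2` and `ψ(λx) ≥ c x^{−δ} ψ(λ)` for
`x ≥ 1`, `λ ≥ 1`. If `I(r) = ∫₀^∞ (4πt)^{−d/2} e^{−r²/(4t)} η(t) dt` exists
for all small `r ∈ (0,1)`, then `I(r) ≍ r^{−d−2A+2} ψ(r^{−2})` as `r → 0+`. -/
theorem stmt_13 (d : ℕ) (hd : 1 ≤ d) (A : ℝ) (hA : 0 < A)
    (η ψ : ℝ → ℝ)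
    (hηpos : ∀ t : ℝ, 0 < t → 0 < η t)
    (hηdec : ∀ s t : ℝ, 0 < s → s ≤ t → η t ≤ η s)
    (hψpos : ∀ l : ℝ, 0 < l → 0 < ψ l)
    (hψdec : ∀ s t : ℝ, 0 < s → s ≤ t → ψ t ≤ ψ s)
    (hψ2 : ∀ s t : ℝ, 0 < s → s ≤ t → s ^ 2 * ψ s ≤ t ^ 2 * ψ t)
    (a₁ a₂ t₀ : ℝ) (ha₁ : 0 < a₁) (ha₂ : 0 < a₂) (ht₀ : t₀ ∈ Ioc (0:ℝ) 1)
    (hcomp : ∀ t : ℝ, 0 < t → t ≤ t₀ →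
      a₁ * t ^ (-A) * ψ t⁻¹ ≤ η t ∧ η t ≤ a₂ * t ^ (-A) * ψ t⁻¹)
    (hint : IntegrableOn (fun t => t ^ (-(d : ℝ) / 2) * η t) (Ioi 1))
    (hcase : A > 3 - (d : ℝ) / 2 ∨
      (d ≤ 2 ∧ ∃ δ : ℝ, 0 < δ ∧ ∃ c : ℝ, 0 < c ∧ A - δ > 1 - (d : ℝ) / 2 ∧
        ∀ x : ℝ, 1 ≤ x → ∀ l : ℝ, 1 ≤ l → c * x ^ (-δ) * ψ l ≤ ψ (l * x)))
    (hexist : ∃ r₁ : ℝ, r₁ ∈ Ioo (0:ℝ) 1 ∧ ∀ r : ℝ, 0 < r → r < r₁ →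
      IntegrableOn
        (fun t => (4 * π * t) ^ (-(d : ℝ) / 2) * Real.exp (-(r ^ 2 / (4 * t))) * η t)
        (Ioi 0)) :
    ∃ c₁ : ℝ, 0 < c₁ ∧ ∃ c₂ : ℝ, 0 < c₂ ∧ ∃ r₀ : ℝ, r₀ ∈ Ioo (0:ℝ) 1 ∧
      ∀ r : ℝ, 0 < r → r < r₀ →
        c₁ * r ^ (-(d : ℝ) - 2 * A + 2) * ψ ((r ^ 2)⁻¹)
            ≤ (∫ t in Ioi (0:ℝ),
                (4 * π * t) ^ (-(d : ℝ) / 2) * Real.exp (-(r ^ 2 / (4 * t))) * η t) ∧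
        (∫ t in Ioi (0:ℝ),
            (4 * π * t) ^ (-(d : ℝ) / 2) * Real.exp (-(r ^ 2 / (4 * t))) * η t)
          ≤ c₂ * r ^ (-(d : ℝ) - 2 * A + 2) * ψ ((r ^ 2)⁻¹) := by
  have hηanti : AntitoneOn η (Ioi 0) := fun s hs t _ hst => hηdec s t hs hst
  obtain ⟨δ, hδ, c, hc, hp, hscal⟩ : ∃ δ : ℝ, 0 ≤ δ ∧ ∃ c : ℝ, 0 < c ∧
      1 + δ < A + (d : ℝ) / 2 ∧ HasLowerScaling ψ δ c := by
    rcases hcase with h | ⟨-, δ, hδ, c, hc, h, hscal⟩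
    · exact ⟨2, zero_le_two, 1, one_pos, by linarith,
        .of_monotoneOn_rpow_mul fun s hs t _ hst => by
          simpa only [rpow_two] using hψ2 s t hs hst⟩
    · exact ⟨δ, hδ.le, c, hc, by linarith, hscal⟩
  exact stmt_13_general (fun t ht => (hηpos t ht).le)
    (aemeasurable_restrict_of_antitoneOn measurableSet_Ioi hηanti).aestronglyMeasurable
    (integrableOn_Ioi_rpow_mul_of_antitoneOn hηanti ht₀.1 hint) hψpos
    (fun s hs t _ hst => hψdec s t hs hst) hscal hc hδ hp ha₁ ha₂ ht₀ hcomp
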